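/- arXiv:2411.19592 — 3 statements merged into one kernel-verified Lean document; each statement's English description precedes it below -/
import Mathlib

section
/- Let A_0, …, A_n be real numbers with ∑_i A_i = 0 and ∑_i A_i B_i = 0, where B_0, …, B_n are strictly positive real numbers. Then the function ρ ↦ ρ^{-2} ∑_i A_i e^{-ρ B_i} is integrable on (0, ∞) and ∫_0^∞ ρ^{-2} ∑_i A_i e^{-ρ B_i} dρ = ∑_i A_i B_i log B_i. -/
open MeasureTheory Real

/-- The auxiliary difference `e^{-x} - e^{-bx}`. -/
noncomputable def frAux (b x : ℝ) : ℝ := Real.exp (-x) - Real.exp (-(b * x))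

lemma frAux_hasDerivAt (b x : ℝ) :
    HasDerivAt (frAux b) (-Real.exp (-x) + b * Real.exp (-(b * x))) x := by
  have h1 : HasDerivAt (fun x : ℝ => Real.exp (-x)) (Real.exp (-x) * (-1)) x :=
    (hasDerivAt_id x).neg.exp
  have h2 : HasDerivAt (fun x : ℝ => Real.exp (-(b * x))) (Real.exp (-(b * x)) * (-(b * 1))) x :=
    ((hasDerivAt_id x).const_mul b).neg.exp
  have h3 : HasDerivAt (frAux b)
      (Real.exp (-x) * (-1) - Real.exp (-(b * x)) * (-(b * 1))) x := h1.sub h2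
  exact h3.congr_deriv (by ring)

lemma frAux_upper (b x : ℝ) : frAux b x ≤ (b - 1) * x * Real.exp (-x) := by
  have h := Real.add_one_le_exp (-((b - 1) * x))
  have e : Real.exp (-(b * x)) = Real.exp (-((b - 1) * x)) * Real.exp (-x) := by
    rw [← Real.exp_add]; congr 1; ring
  unfold frAux
  rw [e]
  nlinarith [Real.exp_pos (-x)]

lemma frAux_lower (b x : ℝ) : (b - 1) * x * Real.exp (-(b * x)) ≤ frAux b x := by
  have h := Real.add_one_le_exp ((b - 1) * x)
  have e : Real.exp (-x) = Real.exp ((b - 1) * x) * Real.exp (-(b * x)) := by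
    rw [← Real.exp_add]; congr 1; ring
  unfold frAux
  rw [e]
  nlinarith [Real.exp_pos (-(b * x))]

lemma frAux_bound (b x : ℝ) (hx : 0 < x) :
    ‖x⁻¹ * frAux b x‖ ≤ |b - 1| * (Real.exp (-x) + Real.exp (-(b * x))) := by
  have h1 := frAux_upper b x
  have h2 := frAux_lower b x
  have e1 := Real.exp_pos (-x)
  have e2 := Real.exp_pos (-(b * x))
  have a1 := le_abs_self (b - 1)
  have a2 := neg_abs_le (b - 1)
  have a3 := abs_nonneg (b - 1)
  rw [norm_mul, norm_inv, Real.norm_of_nonneg hx.le, inv_mul_le_iff₀ hx, Real.norm_eq_abs, abs_le]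
  constructor
  · refine le_trans ?_ h2
    nlinarith [mul_nonneg (mul_nonneg hx.le e1.le) a3,
      mul_le_mul_of_nonneg_right a2 (mul_nonneg hx.le e2.le)]
  · refine h1.trans ?_
    nlinarith [mul_nonneg (mul_nonneg hx.le e2.le) a3,
      mul_le_mul_of_nonneg_right a1 (mul_nonneg hx.le e1.le)]

lemma exp_int (b : ℝ) (hb : 0 < b) :
    IntegrableOn (fun x : ℝ => Real.exp (-(b * x))) (Set.Ioi 0) := by
  simpa using integrableOn_exp_mul_Ioi (a := -b) (by linarith) 0

lemma frAux_int (b : ℝ) (hb : 0 < b) :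
    IntegrableOn (fun x : ℝ => x⁻¹ * frAux b x) (Set.Ioi 0) := by
  have hg : IntegrableOn (fun x : ℝ => |b - 1| * (Real.exp (-x) + Real.exp (-(b * x))))
      (Set.Ioi 0) := by
    have := exp_int 1 one_pos
    simp only [one_mul] at this
    exact (this.add (exp_int b hb)).const_mul _
  refine Integrable.mono' hg ?_ ?_
  · unfold frAux
    exact (by fun_prop : Measurable _).aestronglyMeasurable
  · filter_upwards [ae_restrict_mem measurableSet_Ioi] with x hx
    exact frAux_bound b x hx

lemma frAux_integral (b : ℝ) (hb : 0 < b) :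
    ∫ x in Set.Ioi (0 : ℝ), x⁻¹ * frAux b x = Real.log b := by
  have hc : Continuous (fun x : ℝ => Real.exp (-x)) := by fun_prop
  have h := Frullani.integral_Ioi_eq (f := fun x : ℝ => Real.exp (-x)) (a := 1) (b := b)
    (L := 1) (R := 0) (hc.locallyIntegrable.locallyIntegrableOn _) one_pos hb
    (by
      have := hc.tendsto 0
      simp only [neg_zero, Real.exp_zero] at this
      exact this.mono_left nhdsWithin_le_nhds)
    Real.tendsto_exp_neg_atTop_nhds_zero
    (by simpa [frAux] using frAux_int b hb)
  simpa [frAux] using h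

/-- The derivative of `x⁻¹ (e^{-x} - e^{-bx})`. -/
noncomputable def frD (b x : ℝ) : ℝ :=
  (x ^ 2)⁻¹ * ((1 + b * x) * Real.exp (-(b * x)) - (1 + x) * Real.exp (-x))

lemma one_add_mul_exp_anti {x y : ℝ} (hx : 0 ≤ x) (hxy : x ≤ y) :
    (1 + y) * Real.exp (-y) ≤ (1 + x) * Real.exp (-x) := by
  have h := Real.add_one_le_exp (y - x)
  have e : Real.exp (-x) = Real.exp (y - x) * Real.exp (-y) := by
    rw [← Real.exp_add]; congr 1; ring
  rw [e, ← mul_assoc]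
  refine mul_le_mul_of_nonneg_right ?_ (Real.exp_pos _).le
  nlinarith [mul_nonneg hx (sub_nonneg.2 hxy)]

lemma dsl_deriv (b x : ℝ) (hx : x ≠ 0) :
    HasDerivAt (dslope (frAux b) 0) (frD b x) x := by
  have h : HasDerivAt (fun x : ℝ => x⁻¹ * frAux b x) (frD b x) x := by
    refine ((hasDerivAt_inv hx).mul (frAux_hasDerivAt b x)).congr_deriv ?_
    unfold frD frAux
    field_simp
    ring
  refine h.congr_of_eventuallyEq ?_
  filter_upwards [isOpen_ne.mem_nhds hx] with y hy
  rw [dslope_of_ne _ hy, slope_def_field]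
  simp [frAux]
  ring

lemma dsl_tendsto (b : ℝ) (hb : 0 < b) :
    Filter.Tendsto (dslope (frAux b) 0) Filter.atTop (nhds 0) := by
  have h1 : Filter.Tendsto (frAux b) Filter.atTop (nhds 0) := by
    have := Real.tendsto_exp_neg_atTop_nhds_zero.sub
      (Real.tendsto_exp_neg_atTop_nhds_zero.comp (Filter.tendsto_id.const_mul_atTop hb))
    simp only [sub_zero, Function.comp_def, id] at this
    exact this
  have h2 := tendsto_inv_atTop_zero.mul h1
  rw [mul_zero] at h2
  refine h2.congr' ?_
  filter_upwards [Filter.eventually_ne_atTop 0] with y hy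
  rw [dslope_of_ne _ hy, slope_def_field]
  simp [frAux]
  ring

lemma frD_main (b : ℝ) (hb : 0 < b) :
    IntegrableOn (frD b) (Set.Ioi 0) ∧ ∫ x in Set.Ioi (0 : ℝ), frD b x = 1 - b := by
  have hc : ContinuousWithinAt (dslope (frAux b) 0) (Set.Ici 0) 0 :=
    (continuousAt_dslope_same.2 (frAux_hasDerivAt b 0).differentiableAt).continuousWithinAt
  have hd : ∀ x ∈ Set.Ioi (0 : ℝ), HasDerivAt (dslope (frAux b) 0) (frD b x) x :=
    fun x hx => dsl_deriv b x (ne_of_gt hx)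
  have hint : IntegrableOn (frD b) (Set.Ioi 0) := by
    rcases le_total 1 b with h | h
    · refine integrableOn_Ioi_deriv_of_nonpos hc hd (fun x hx => ?_) (dsl_tendsto b hb)
      have hx : 0 < x := hx
      refine mul_nonpos_of_nonneg_of_nonpos (by positivity) (sub_nonpos.2 ?_)
      exact one_add_mul_exp_anti hx.le (by nlinarith)
    · refine integrableOn_Ioi_deriv_of_nonneg hc hd (fun x hx => ?_) (dsl_tendsto b hb)
      have hx : 0 < x := hx
      refine mul_nonneg (by positivity) (sub_nonneg.2 ?_)
      exact one_add_mul_exp_anti (by positivity) (by nlinarith)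
  refine ⟨hint, ?_⟩
  rw [integral_Ioi_of_hasDerivAt_of_tendsto hc hd hint (dsl_tendsto b hb), dslope_same,
    (frAux_hasDerivAt b 0).deriv]
  simp
  ring

/-- If `∑ᵢ Aᵢ = 0` and `∑ᵢ Aᵢ Bᵢ = 0`, then
`∫_0^∞ ρ⁻² ∑ᵢ Aᵢ e^{-ρ Bᵢ} dρ = ∑ᵢ Aᵢ Bᵢ log Bᵢ`. -/
theorem integral_inv_sq_mul_sum_exp_neg_mul (n : ℕ) (A B : Fin (n + 1) → ℝ)
    (hB : ∀ i, 0 < B i) (hA : ∑ i, A i = 0) (hAB : ∑ i, A i * B i = 0) :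
    IntegrableOn (fun ρ : ℝ => (ρ ^ 2)⁻¹ * ∑ i, A i * Real.exp (-ρ * B i))
      (Set.Ioi 0) volume ∧
    ∫ ρ in Set.Ioi (0 : ℝ), (ρ ^ 2)⁻¹ * ∑ i, A i * Real.exp (-ρ * B i) =
      ∑ i, A i * B i * Real.log (B i) := by
  have key : Set.EqOn (fun ρ : ℝ => ∑ i, A i * (frD (B i) ρ + B i * (ρ⁻¹ * frAux (B i) ρ)))
      (fun ρ : ℝ => (ρ ^ 2)⁻¹ * ∑ i, A i * Real.exp (-ρ * B i)) (Set.Ioi 0) := by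
    intro ρ hρ
    have hρ : ρ ≠ 0 := ne_of_gt hρ
    have e : ∀ i, A i * (frD (B i) ρ + B i * (ρ⁻¹ * frAux (B i) ρ)) =
        (ρ ^ 2)⁻¹ * (A i * Real.exp (-ρ * B i))
          + A i * B i * (ρ⁻¹ * Real.exp (-ρ))
          - A i * ((ρ ^ 2)⁻¹ * (1 + ρ) * Real.exp (-ρ)) := by
      intro i
      have : -ρ * B i = -(B i * ρ) := by ring
      rw [this]
      unfold frD frAux
      field_simp
      ring
    simp only [e]
    rw [Finset.sum_sub_distrib, Finset.sum_add_distrib, ← Finset.sum_mul, ← Finset.sum_mul,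
      hA, hAB, ← Finset.mul_sum]
    ring
  have hi : ∀ i, IntegrableOn (fun ρ : ℝ => A i * (frD (B i) ρ + B i * (ρ⁻¹ * frAux (B i) ρ)))
      (Set.Ioi 0) := fun i =>
    ((frD_main _ (hB i)).1.add ((frAux_int _ (hB i)).const_mul _)).const_mul _
  refine ⟨IntegrableOn.congr_fun (integrable_finsetSum _ fun i _ => hi i) key measurableSet_Ioi, ?_⟩
  rw [← setIntegral_congr_fun measurableSet_Ioi key, integral_finsetSum _ fun i _ => hi i]
  have e : ∀ i, ∫ ρ in Set.Ioi (0 : ℝ), A i * (frD (B i) ρ + B i * (ρ⁻¹ * frAux (B i) ρ)) =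
      A i - A i * B i + A i * B i * Real.log (B i) := by
    intro i
    rw [integral_const_mul, integral_add (frD_main _ (hB i)).1
      ((frAux_int _ (hB i)).const_mul _), integral_const_mul, (frD_main _ (hB i)).2,
      frAux_integral _ (hB i)]
    ring
  simp only [e]
  rw [Finset.sum_add_distrib, Finset.sum_sub_distrib, hA, hAB]
  ring
end

section
/- Let A_0, …, A_n be real numbers with ∑_i A_i = 0, let M_0, …, M_n be strictly positive reals, let k, p ∈ ℝ⁴, and fix coordinate indices μ, ν. Then q ↦ ∑_i A_i · q_ν (q-k)_μ / ((‖q‖²+M_i²)(‖q-k‖²+M_i²)(‖q+p‖²+M_i²)) is Lebesgue integrable on ℝ⁴ and its integral equals π² times the integral over the simplex {(β₁,β₂,β₃) : β_j ≥ 0, β₁+β₂+β₃ = 1} (parametrized by β₁ ∈ [0,1], β₂ ∈ [0,1-β₁], β₃ = 1-β₁-β₂) of ∑_i A_i (β₂k - β₃p)_ν (β₃(-k-p) - β₁k)_μ / (β₁β₂‖k‖² + β₁β₃‖p‖² + β₂β₃‖k+p‖² + M_i²) - (δ_{μν}/2) ∑_i A_i log(β₁β₂‖k‖² + β₁β₃‖p‖²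 + β₂β₃‖k+p‖² + M_i²). -/
open MeasureTheory Real

abbrev PVE := EuclideanSpace ℝ (Fin 4)

lemma pv_base : Integrable (fun l : PVE => ((1 + ‖l‖ ^ 2) ^ 3)⁻¹) := by
  have h := integrable_rpow_neg_one_add_norm_sq (E := PVE) (μ := volume) (r := 6) (by simp; norm_num)
  refine h.congr (Filter.Eventually.of_forall fun l => ?_)
  have : (0:ℝ) ≤ 1 + ‖l‖ ^ 2 := by positivity
  simp only
  rw [show (-6/2 : ℝ) = -((3:ℕ):ℝ) by norm_num, Real.rpow_neg this, Real.rpow_natCast]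

lemma pv_diff {a b w : ℝ} (hw : 0 < w) (ha : w ≤ a) (hb : w ≤ b) :
    |2 / a ^ 3 - 2 / b ^ 3| ≤ 6 * |b - a| * (w ^ 4)⁻¹ := by
  have ha' : 0 < a := hw.trans_le ha
  have hb' : 0 < b := hw.trans_le hb
  have e : 2 / a ^ 3 - 2 / b ^ 3 =
      2 * ((a * b ^ 3)⁻¹ + (a ^ 2 * b ^ 2)⁻¹ + (a ^ 3 * b)⁻¹) * (b - a) := by
    field_simp; ring
  rw [e, abs_mul, abs_of_nonneg (by positivity)]
  have h1 : (a * b ^ 3)⁻¹ ≤ (w ^ 4)⁻¹ := by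
    rw [show w ^ 4 = w * w ^ 3 by ring]; gcongr
  have h2 : (a ^ 2 * b ^ 2)⁻¹ ≤ (w ^ 4)⁻¹ := by
    rw [show w ^ 4 = w ^ 2 * w ^ 2 by ring]; gcongr
  have h3 : (a ^ 3 * b)⁻¹ ≤ (w ^ 4)⁻¹ := by
    rw [show w ^ 4 = w ^ 3 * w by ring]; gcongr
  have := abs_nonneg (b - a)
  nlinarith

/-- Feynman denominator. -/
noncomputable def pvQ (k p q : PVE) (x y : ℝ) : ℝ :=
  x * ‖q‖ ^ 2 + y * ‖q - k‖ ^ 2 + (1 - x - y) * ‖q + p‖ ^ 2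

lemma pv_lower1 (k : PVE) {m : ℝ} (hm : 0 < m) :
    ∃ c, 0 < c ∧ ∀ q : PVE, c * (1 + ‖q‖ ^ 2) ≤ ‖q - k‖ ^ 2 + m := by
  have hC : 0 < 2 + (2 * ‖k‖ ^ 2 + 1) / m := by positivity
  refine ⟨(2 + (2 * ‖k‖ ^ 2 + 1) / m)⁻¹, by positivity, fun q => ?_⟩
  rw [inv_mul_le_iff₀ hC]
  have h1 : ‖q‖ ≤ ‖q - k‖ + ‖k‖ := by simpa using norm_add_le (q - k) k
  have h2 : ‖q‖ ^ 2 ≤ 2 * ‖q - k‖ ^ 2 + 2 * ‖k‖ ^ 2 := by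
    nlinarith [norm_nonneg q, sq_nonneg (‖q - k‖ - ‖k‖)]
  have h3 : (2 * ‖k‖ ^ 2 + 1) / m * m = 2 * ‖k‖ ^ 2 + 1 := by field_simp
  have h4 : 0 ≤ (2 * ‖k‖ ^ 2 + 1) / m * ‖q - k‖ ^ 2 := by positivity
  nlinarith

lemma pv_lower (k p : PVE) {m : ℝ} (hm : 0 < m) :
    ∃ c, 0 < c ∧ ∀ (q : PVE) (x y : ℝ), 0 ≤ x → 0 ≤ y → x + y ≤ 1 →
      c * (1 + ‖q‖ ^ 2) ≤ pvQ k p q x y + m := by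
  obtain ⟨c0, h0, H0⟩ := pv_lower1 0 hm
  obtain ⟨c1, h1, H1⟩ := pv_lower1 k hm
  obtain ⟨c2, h2, H2⟩ := pv_lower1 (-p) hm
  refine ⟨min c0 (min c1 c2), by positivity, fun q x y hx hy hxy => ?_⟩
  set c := min c0 (min c1 c2)
  have hq : 0 ≤ 1 + ‖q‖ ^ 2 := by positivity
  have g0 : c * (1 + ‖q‖ ^ 2) ≤ ‖q‖ ^ 2 + m := by
    have := H0 q; rw [sub_zero] at this
    exact (mul_le_mul_of_nonneg_right (min_le_left _ _) hq).trans this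
  have g1 : c * (1 + ‖q‖ ^ 2) ≤ ‖q - k‖ ^ 2 + m :=
    (mul_le_mul_of_nonneg_right ((min_le_right _ _).trans (min_le_left _ _)) hq).trans (H1 q)
  have g2 : c * (1 + ‖q‖ ^ 2) ≤ ‖q + p‖ ^ 2 + m := by
    have := H2 q; rw [sub_neg_eq_add] at this
    exact (mul_le_mul_of_nonneg_right ((min_le_right _ _).trans (min_le_right _ _)) hq).trans this
  have hz : 0 ≤ 1 - x - y := by linarith
  have := mul_le_mul_of_nonneg_left g0 hx
  have := mul_le_mul_of_nonneg_left g1 hy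
  have := mul_le_mul_of_nonneg_left g2 hz
  unfold pvQ
  nlinarith

/-- The main domination. -/
lemma pv_dom (k p : PVE) {t t0 C : ℝ} (ht : 0 < t) (ht0 : 0 < t0) (g : PVE → ℝ) 
    (hg : ∀ q, |g q| ≤ C * (1 + ‖q‖ ^ 2)) :
    ∃ B, ∀ (q : PVE) (x y : ℝ), 0 ≤ x → 0 ≤ y → x + y ≤ 1 →
      |g q * (2 / (pvQ k p q x y + t) ^ 3 - 2 / (pvQ k p q x y + t0) ^ 3)| ≤
        B * ((1 + ‖q‖ ^ 2) ^ 3)⁻¹ := by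
  obtain ⟨c, hc, H⟩ := pv_lower k p (lt_min ht ht0)
  refine ⟨C * (6 * |t0 - t| * (c ^ 4)⁻¹), fun q x y hx hy hxy => ?_⟩
  have hq : 0 < 1 + ‖q‖ ^ 2 := by positivity
  have hw := H q x y hx hy hxy
  have d := pv_diff (a := pvQ k p q x y + t) (b := pvQ k p q x y + t0) (mul_pos hc hq)
    (hw.trans (by gcongr; exact min_le_left _ _)) (hw.trans (by gcongr; exact min_le_right _ _))
  rw [add_sub_add_left_eq_sub] at d
  rw [abs_mul]
  calc _ ≤ (C * (1 + ‖q‖ ^ 2)) * (6 * |t0 - t| * ((c * (1 + ‖q‖ ^ 2)) ^ 4)⁻¹) :=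
        mul_le_mul (hg q) d (abs_nonneg _) ((abs_nonneg _).trans (hg q))
    _ = _ := by field_simp

lemma pvQ_zero (q : PVE) : pvQ 0 0 q 0 0 = ‖q‖ ^ 2 := by simp [pvQ]

lemma pv_int (k p : PVE) {t t0 C : ℝ} (ht : 0 < t) (ht0 : 0 < t0) (g : PVE → ℝ)
    (hgc : Continuous g)
    (hg : ∀ q, |g q| ≤ C * (1 + ‖q‖ ^ 2)) {x y : ℝ} (hx : 0 ≤ x) (hy : 0 ≤ y) (hxy : x + y ≤ 1) :
    Integrable fun q : PVE =>
      g q * (2 / (pvQ k p q x y + t) ^ 3 - 2 / (pvQ k p q x y + t0) ^ 3) := by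
  obtain ⟨B, hB⟩ := pv_dom k p ht ht0 g hg
  refine (pv_base.const_mul B).mono' ?_ (Filter.Eventually.of_forall fun q => ?_)
  · unfold pvQ
    have := hgc.measurable
    exact Measurable.aestronglyMeasurable (by fun_prop)
  · exact hB q x y hx hy hxy

lemma pv_int0 {t t0 C : ℝ} (ht : 0 < t) (ht0 : 0 < t0) (g : PVE → ℝ)
    (hgc : Continuous g)
    (hg : ∀ q, |g q| ≤ C * (1 + ‖q‖ ^ 2)) :
    Integrable fun q : PVE =>
      g q * (2 / (‖q‖ ^ 2 + t) ^ 3 - 2 / (‖q‖ ^ 2 + t0) ^ 3) := by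
  simpa [pvQ_zero] using pv_int 0 0 ht ht0 g hgc hg le_rfl le_rfl (by norm_num)

lemma pv_ball : (volume : Measure PVE).real (Metric.ball 0 1) = π ^ 2 / 2 := by
  rw [Measure.real, EuclideanSpace.volume_ball]
  have : Real.Gamma ((4:ℝ) / 2 + 1) = 2 := by
    rw [show ((4:ℝ) / 2 + 1) = (2:ℕ) + 1 by norm_num, Real.Gamma_nat_eq_factorial]; norm_num
  have h4 : √π ^ 4 = π ^ 2 := by
    rw [show √π ^ 4 = (√π ^ 2) ^ 2 by ring, Real.sq_sqrt pi_pos.le]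
  simp [this, h4]
  positivity

lemma pv_radial (f : ℝ → ℝ) : ∫ l : PVE, f ‖l‖ = 2 * π ^ 2 * ∫ y in Set.Ioi (0:ℝ), y ^ 3 * f y := by
  rw [integral_fun_norm_addHaar volume f, pv_ball]
  simp
  ring

lemma pv_R1 {t : ℝ} (ht : 0 < t) : ∫ l : PVE, 2 / (‖l‖ ^ 2 + t) ^ 3 = π ^ 2 / t := by
  rw [pv_radial (fun y => 2 / (y ^ 2 + t) ^ 3)]
  have := integral_Ioi_of_hasDerivAt_of_nonneg (a := 0) (l := 1 / (2 * t))
    (g := fun y : ℝ => y ^ 4 / (2 * t * (y ^ 2 + t) ^ 2))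
    (g' := fun y => y ^ 3 * (2 / (y ^ 2 + t) ^ 3)) ?_ ?_ ?_ ?_
  · rw [this]; simp; field_simp
  · exact Continuous.continuousWithinAt (by
      refine Continuous.div (by fun_prop) (by fun_prop) fun y => by positivity)
  · intro y hy
    have h : y ^ 2 + t ≠ 0 := by positivity
    have hd : HasDerivAt (fun y : ℝ => 2 * t * (y ^ 2 + t) ^ 2)
        (2 * t * (2 * (y ^ 2 + t) * (2 * y))) y := by
      have := ((((hasDerivAt_id y).pow 2).add_const t).pow 2).const_mul (2 * t)
      exact this.congr_deriv (by simp)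
    refine (((hasDerivAt_id y).pow 4).div hd (by positivity)).congr_deriv ?_
    simp only [id, Pi.pow_apply]
    field_simp
    ring
  · intro y hy
    have : 0 < y := hy
    positivity
  · have h : Filter.Tendsto (fun y : ℝ => 1 / (2 * t) * (1 - t * (y ^ 2 + t)⁻¹) ^ 2) Filter.atTop
        (nhds (1 / (2 * t) * (1 - t * 0) ^ 2)) := by
      have h0 : Filter.Tendsto (fun y : ℝ => (y ^ 2 + t)⁻¹) Filter.atTop (nhds 0) :=
        Filter.Tendsto.inv_tendsto_atTop (Filter.tendsto_atTop_add_const_right _ _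
          (Filter.tendsto_pow_atTop two_ne_zero))
      exact ((h0.const_mul t).const_sub 1).pow 2 |>.const_mul _
    have e : (1 / (2 * t) * (1 - t * 0) ^ 2) = 1 / (2 * t) := by ring
    rw [e] at h
    refine h.congr fun y => ?_
    have : y ^ 2 + t ≠ 0 := by positivity
    field_simp
    ring

lemma pv_I1 {t : ℝ} (ht : 0 < t) : Integrable fun l : PVE => 2 / (‖l‖ ^ 2 + t) ^ 3 := by
  by_contra h
  have := pv_R1 ht
  rw [integral_undef h] at this
  have : 0 < π ^ 2 / t := by positivity
  linarith

lemma pv_R2 {t t0 : ℝ} (ht : 0 < t) (ht0 : 0 < t0) :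
    ∫ l : PVE, ‖l‖ ^ 2 * (2 / (‖l‖ ^ 2 + t) ^ 3 - 2 / (‖l‖ ^ 2 + t0) ^ 3) =
      2 * π ^ 2 * (log t0 - log t) := by
  have hI : Integrable fun l : PVE =>
      ‖l‖ ^ 2 * (2 / (‖l‖ ^ 2 + t) ^ 3 - 2 / (‖l‖ ^ 2 + t0) ^ 3) :=
    pv_int0 (C := 1) ht ht0 (fun l => ‖l‖ ^ 2) (by fun_prop) (fun q => by
      rw [abs_of_nonneg (by positivity)]; linarith)
  rw [pv_radial (fun y => y ^ 2 * (2 / (y ^ 2 + t) ^ 3 - 2 / (y ^ 2 + t0) ^ 3))]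
  have hI' := (integrable_fun_norm_addHaar (volume : Measure PVE)
    (f := fun y => y ^ 2 * (2 / (y ^ 2 + t) ^ 3 - 2 / (y ^ 2 + t0) ^ 3))).1 hI
  simp only [finrank_euclideanSpace, Fintype.card_fin, smul_eq_mul] at hI'
  have hd : ∀ s : ℝ, 0 < s → ∀ y : ℝ, HasDerivAt
      (fun y : ℝ => 2 * s * (y ^ 2 + s)⁻¹ - s ^ 2 / 2 * ((y ^ 2 + s)⁻¹) ^ 2)
      (y ^ 5 * (2 / (y ^ 2 + s) ^ 3) - 2 * y / (y ^ 2 + s)) y := by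
    intro s hs y
    have h : y ^ 2 + s ≠ 0 := by positivity
    have h1 : HasDerivAt (fun y : ℝ => y ^ 2 + s) (2 * y) y := by
      simpa using ((hasDerivAt_id y).pow 2).add_const s
    have h2 := h1.inv h
    refine ((h2.const_mul (2 * s)).sub ((h2.pow 2).const_mul (s ^ 2 / 2))).congr_deriv ?_
    simp only [Pi.inv_apply, Nat.reduceSub, pow_one, Nat.cast_ofNat]
    field_simp
    ring
  have hl : ∀ y : ℝ, HasDerivAt (fun y : ℝ => log ((y ^ 2 + t) / (y ^ 2 + t0)))
      (2 * y / (y ^ 2 + t) - 2 * y / (y ^ 2 + t0)) y := by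
    intro y
    have h : y ^ 2 + t ≠ 0 := by positivity
    have h0 : y ^ 2 + t0 ≠ 0 := by positivity
    have h1 : ∀ s, HasDerivAt (fun y : ℝ => y ^ 2 + s) (2 * y) y := fun s => by
      simpa using ((hasDerivAt_id y).pow 2).add_const s
    refine (((h1 t).log h).sub ((h1 t0).log h0)).congr_of_eventuallyEq
      (Filter.Eventually.of_forall fun y => ?_)
    exact Real.log_div (by positivity) (by positivity)
  have h0 : ∀ s : ℝ, Filter.Tendsto (fun y : ℝ => (y ^ 2 + s)⁻¹) Filter.atTop (nhds 0) := fun s =>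
        Filter.Tendsto.inv_tendsto_atTop (Filter.tendsto_atTop_add_const_right _ _
          (Filter.tendsto_pow_atTop two_ne_zero))
  have hlim : ∀ s : ℝ, Filter.Tendsto
      (fun y : ℝ => 2 * s * (y ^ 2 + s)⁻¹ - s ^ 2 / 2 * ((y ^ 2 + s)⁻¹) ^ 2)
      Filter.atTop (nhds 0) := fun s => by
    simpa using ((h0 s).const_mul (2 * s)).sub (((h0 s).pow 2).const_mul (s ^ 2 / 2))
  have hlimlog : Filter.Tendsto (fun y : ℝ => log ((y ^ 2 + t) / (y ^ 2 + t0)))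
      Filter.atTop (nhds 0) := by
    have : Filter.Tendsto (fun y : ℝ => (y ^ 2 + t) / (y ^ 2 + t0)) Filter.atTop (nhds 1) := by
      have := ((h0 t0).const_mul (t - t0)).const_add 1
      rw [mul_zero, add_zero] at this
      refine this.congr fun y => ?_
      have : y ^ 2 + t0 ≠ 0 := by positivity
      field_simp
      ring
    simpa using this.log one_ne_zero
  have := integral_Ioi_of_hasDerivAt_of_tendsto' (a := 0)
    (fun y _ => (((hl y).add ((hd t ht y))).sub (hd t0 ht0 y))) ?_
    ((hlimlog.add (hlim t)).sub (hlim t0))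
  · rw [← sub_eq_zero]
    rw [show (fun y : ℝ => y ^ 3 * (y ^ 2 * (2 / (y ^ 2 + t) ^ 3 - 2 / (y ^ 2 + t0) ^ 3))) =
      fun y => (2 * y / (y ^ 2 + t) - 2 * y / (y ^ 2 + t0) + (y ^ 5 * (2 / (y ^ 2 + t) ^ 3) - 2 * y / (y ^ 2 + t)) - (y ^ 5 * (2 / (y ^ 2 + t0) ^ 3) - 2 * y / (y ^ 2 + t0))) by
        funext y; ring]
    rw [this]
    simp
    rw [Real.log_div ht.ne' ht0.ne']
    field_simp
    ring
  · refine hI'.congr_fun (fun y _ => ?_) measurableSet_Ioi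
    simp only
    ring

lemma pv_coord_le (l : PVE) (i : Fin 4) : |l i| ≤ ‖l‖ := PiLp.norm_apply_le l i

lemma pv_quad_bound (k q : PVE) (μ ν : Fin 4) :
    |q ν * (q - k) μ| ≤ (1 + ‖k‖) * (1 + ‖q‖ ^ 2) := by
  rw [abs_mul]
  have h1 := pv_coord_le q ν
  have h2 := (pv_coord_le (q - k) μ).trans (norm_sub_le q k)
  have h3 := mul_le_mul h1 h2 (abs_nonneg _) (norm_nonneg _)
  nlinarith [norm_nonneg q, norm_nonneg k, sq_nonneg (‖q‖ - 1), mul_nonneg (norm_nonneg k) (sq_nonneg (‖q‖ - 1)), mul_nonneg (norm_nonneg k) (norm_nonneg q)]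

/-- second moment -/
lemma pv_R3 {t t0 : ℝ} (ht : 0 < t) (ht0 : 0 < t0) (μ ν : Fin 4) :
    ∫ l : PVE, (l ν * l μ) * (2 / (‖l‖ ^ 2 + t) ^ 3 - 2 / (‖l‖ ^ 2 + t0) ^ 3) =
      π ^ 2 * ((if μ = ν then (1:ℝ) else 0) / 2 * (log t0 - log t)) := by
  by_cases h : μ = ν
  · subst h
    have hsw : ∀ i : Fin 4,
        ∫ l : PVE, (l i * l i) * (2 / (‖l‖ ^ 2 + t) ^ 3 - 2 / (‖l‖ ^ 2 + t0) ^ 3) =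
        ∫ l : PVE, (l μ * l μ) * (2 / (‖l‖ ^ 2 + t) ^ 3 - 2 / (‖l‖ ^ 2 + t0) ^ 3) := by
      intro i
      let e := LinearIsometryEquiv.piLpCongrLeft 2 ℝ ℝ (Equiv.swap i μ)
      rw [← e.measurePreserving.integral_comp e.toHomeomorph.measurableEmbedding
        (fun l : PVE => (l i * l i) * (2 / (‖l‖ ^ 2 + t) ^ 3 - 2 / (‖l‖ ^ 2 + t0) ^ 3))]
      have he : ∀ l : PVE, (e l) i = l μ := fun l => by
        simp [e, LinearIsometryEquiv.piLpCongrLeft_apply, Equiv.piCongrLeft'_apply]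
      simp only [he, LinearIsometryEquiv.norm_map]
    have hs := pv_R2 ht ht0
    have : ∀ l : PVE, ‖l‖ ^ 2 * (2 / (‖l‖ ^ 2 + t) ^ 3 - 2 / (‖l‖ ^ 2 + t0) ^ 3) =
        ∑ i, (l i * l i) * (2 / (‖l‖ ^ 2 + t) ^ 3 - 2 / (‖l‖ ^ 2 + t0) ^ 3) := fun l => by
      rw [← Finset.sum_mul]
      congr 1
      rw [EuclideanSpace.norm_sq_eq]
      simp [sq]
    simp_rw [this] at hs
    rw [integral_finsetSum] at hs
    · simp_rw [hsw] at hs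
      simp at hs
      simp
      linarith
    · intro i _
      exact pv_int0 (C := 1) ht ht0 (fun l : PVE => l i * l i) (by fun_prop) fun q => by
        simpa using pv_quad_bound 0 q i i
  · rw [if_neg h]
    let e := LinearIsometryEquiv.piLpCongrRight 2
      (fun i : Fin 4 => if i = μ then LinearIsometryEquiv.neg ℝ (E := ℝ)
        else LinearIsometryEquiv.refl ℝ ℝ)
    have h1 := e.measurePreserving.integral_comp e.toHomeomorph.measurableEmbedding
      (fun l : PVE => (l ν * l μ) * (2 / (‖l‖ ^ 2 + t) ^ 3 - 2 / (‖l‖ ^ 2 + t0) ^ 3))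
    have he : ∀ l : PVE, (e l) μ = - l μ := fun l => by
      simp [e, LinearIsometryEquiv.piLpCongrRight_apply]
    have he' : ∀ l : PVE, (e l) ν = l ν := fun l => by
      simp [e, LinearIsometryEquiv.piLpCongrRight_apply, Ne.symm h]
    simp only [he, he', LinearIsometryEquiv.norm_map, mul_neg, neg_mul] at h1
    rw [integral_neg] at h1
    simp
    linarith

lemma pv_R4 {t t0 : ℝ} (μ : Fin 4) :
    ∫ l : PVE, l μ * (2 / (‖l‖ ^ 2 + t) ^ 3 - 2 / (‖l‖ ^ 2 + t0) ^ 3) = 0 := by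
  have h1 := integral_neg_eq_self
    (fun l : PVE => l μ * (2 / (‖l‖ ^ 2 + t) ^ 3 - 2 / (‖l‖ ^ 2 + t0) ^ 3)) volume
  simp only [norm_neg, PiLp.neg_apply, neg_mul] at h1
  rw [integral_neg] at h1
  linarith

/-- the mass term after completing the square -/
noncomputable def pvD (k p : PVE) (x y : ℝ) : ℝ :=
  x * y * ‖k‖ ^ 2 + x * (1 - x - y) * ‖p‖ ^ 2 + y * (1 - x - y) * ‖k + p‖ ^ 2

lemma pv_square (k p q : PVE) (x y : ℝ) :
    pvQ k p q x y = ‖q - (y • k - (1 - x - y) • p)‖ ^ 2 + pvD k p x y := by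
  unfold pvQ pvD
  simp only [EuclideanSpace.norm_sq_eq, Fin.sum_univ_four, PiLp.sub_apply, PiLp.add_apply,
    PiLp.smul_apply, smul_eq_mul, Real.norm_eq_abs, sq_abs]
  ring

lemma pvD_nonneg (k p : PVE) {x y : ℝ} (hx : 0 ≤ x) (hy : 0 ≤ y) (hxy : x + y ≤ 1) :
    0 ≤ pvD k p x y := by
  have : 0 ≤ 1 - x - y := by linarith
  unfold pvD; positivity

/-- momentum integral at fixed Feynman parameters -/
lemma pv_fixed (k p : PVE) {t t0 : ℝ} (ht : 0 < t) (ht0 : 0 < t0) (μ ν : Fin 4) {x y : ℝ}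
    (hx : 0 ≤ x) (hy : 0 ≤ y) (hxy : x + y ≤ 1) :
    ∫ q : PVE, q ν * (q - k) μ *
        (2 / (pvQ k p q x y + t) ^ 3 - 2 / (pvQ k p q x y + t0) ^ 3) =
      π ^ 2 * ((y • k - (1 - x - y) • p) ν * ((1 - x - y) • (-k - p) - x • k) μ *
          (1 / (pvD k p x y + t) - 1 / (pvD k p x y + t0)) +
        (if μ = ν then (1:ℝ) else 0) / 2 * (log (pvD k p x y + t0) - log (pvD k p x y + t))) := by
  have hD := pvD_nonneg k p hx hy hxy
  simp_rw [pv_square]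
  set s := y • k - (1 - x - y) • p with hs
  have hT : 0 < pvD k p x y + t := by linarith
  have hT0 : 0 < pvD k p x y + t0 := by linarith
  simp_rw [add_assoc]
  set T := pvD k p x y + t
  set T0 := pvD k p x y + t0
  have hv : (1 - x - y) • (-k - p) - x • k = s - k := by
    rw [hs]; module
  rw [hv]
  rw [← integral_add_right_eq_self _ s]
  simp only [add_sub_cancel_right]
  have e : ∀ l : PVE, (l + s) ν * (l + s - k) μ * (2 / (‖l‖ ^ 2 + T) ^ 3 - 2 / (‖l‖ ^ 2 + T0) ^ 3) =
      ((l ν * l μ) * (2 / (‖l‖ ^ 2 + T) ^ 3 - 2 / (‖l‖ ^ 2 + T0) ^ 3) +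
      s ν * (l μ * (2 / (‖l‖ ^ 2 + T) ^ 3 - 2 / (‖l‖ ^ 2 + T0) ^ 3))) +
      ((s - k) μ * (l ν * (2 / (‖l‖ ^ 2 + T) ^ 3 - 2 / (‖l‖ ^ 2 + T0) ^ 3)) +
      (s ν * (s - k) μ) * (2 / (‖l‖ ^ 2 + T) ^ 3 - 2 / (‖l‖ ^ 2 + T0) ^ 3)) := fun l => by
    simp only [PiLp.sub_apply, PiLp.add_apply]
    ring
  simp_rw [e]
  have i1 : Integrable fun l : PVE =>
      (l ν * l μ) * (2 / (‖l‖ ^ 2 + T) ^ 3 - 2 / (‖l‖ ^ 2 + T0) ^ 3) :=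
    pv_int0 (C := 1) hT hT0 (fun l : PVE => l ν * l μ) (by fun_prop) fun q => by
        simpa using pv_quad_bound 0 q μ ν
  have i2 : ∀ i, Integrable fun l : PVE =>
      l i * (2 / (‖l‖ ^ 2 + T) ^ 3 - 2 / (‖l‖ ^ 2 + T0) ^ 3) := fun i =>
    pv_int0 (C := 1) hT hT0 (fun l : PVE => l i) (by fun_prop) fun q => by
      have := pv_coord_le q i
      nlinarith [sq_nonneg (‖q‖ - 1), sq_nonneg ‖q‖]
  have i3 : Integrable fun l : PVE => (2 / (‖l‖ ^ 2 + T) ^ 3 - 2 / (‖l‖ ^ 2 + T0) ^ 3) :=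
    (pv_I1 hT).sub (pv_I1 hT0)
  have j2 := (i2 μ).const_mul (s ν)
  have j3 := (i2 ν).const_mul ((s - k) μ)
  have j4 := i3.const_mul (s ν * (s - k) μ)
  have j12 : Integrable fun l : PVE =>
      (l ν * l μ) * (2 / (‖l‖ ^ 2 + T) ^ 3 - 2 / (‖l‖ ^ 2 + T0) ^ 3) +
      s ν * (l μ * (2 / (‖l‖ ^ 2 + T) ^ 3 - 2 / (‖l‖ ^ 2 + T0) ^ 3)) := i1.add j2
  have j34 : Integrable fun l : PVE =>
      (s - k) μ * (l ν * (2 / (‖l‖ ^ 2 + T) ^ 3 - 2 / (‖l‖ ^ 2 + T0) ^ 3)) +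
      (s ν * (s - k) μ) * (2 / (‖l‖ ^ 2 + T) ^ 3 - 2 / (‖l‖ ^ 2 + T0) ^ 3) := j3.add j4
  rw [integral_add j12 j34, integral_add i1 j2, integral_add j3 j4,
    integral_const_mul, integral_const_mul, integral_const_mul, pv_R4, pv_R4, pv_R3 hT hT0,
    integral_sub (pv_I1 hT) (pv_I1 hT0), pv_R1 hT, pv_R1 hT0]
  ring

lemma pv_den_pos {a b c x y : ℝ} (ha : 0 < a) (hb : 0 < b) (hc : 0 < c)
    (hx : 0 ≤ x) (hy : 0 ≤ y) (hxy : x + y ≤ 1) : 0 < x * a + y * b + (1 - x - y) * c := by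
  have hz : 0 ≤ 1 - x - y := by linarith
  have h1 := mul_nonneg hx ha.le
  have h2 := mul_nonneg hy hb.le
  have h3 := mul_nonneg hz hc.le
  by_contra h
  have e1 : x * a = 0 := by linarith
  have e2 : y * b = 0 := by linarith
  have e3 : (1 - x - y) * c = 0 := by linarith
  simp only [mul_eq_zero, ha.ne', hb.ne', hc.ne', or_false] at e1 e2 e3
  linarith

lemma pv_inner {a b c x : ℝ} (ha : 0 < a) (hb : 0 < b) (hc : 0 < c) (hx : 0 ≤ x) (hx1 : x ≤ 1) :
    IntervalIntegrable (fun y => 2 / (x * a + y * b + (1 - x - y) * c) ^ 3) volume 0 (1 - x) ∧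
    ∫ y in (0:ℝ)..(1 - x), 2 / (x * a + y * b + (1 - x - y) * c) ^ 3 =
      (1 - x) * ((x * a + (1 - x) * c) + (x * a + (1 - x) * b)) /
        ((x * a + (1 - x) * c) ^ 2 * (x * a + (1 - x) * b) ^ 2) := by
  have hpos : ∀ y ∈ Set.uIcc 0 (1 - x), 0 < x * a + y * b + (1 - x - y) * c := fun y hy => by
    rw [Set.uIcc_of_le (by linarith)] at hy
    exact pv_den_pos ha hb hc hx hy.1 (by linarith [hy.2])
  have hi : IntervalIntegrable (fun y => 2 / (x * a + y * b + (1 - x - y) * c) ^ 3)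
      volume 0 (1 - x) := by
    refine ContinuousOn.intervalIntegrable ?_
    refine ContinuousOn.div (by fun_prop) (by fun_prop) fun y hy => ?_
    have := hpos y hy
    positivity
  refine ⟨hi, ?_⟩
  have he : 0 < x * a + (1 - x) * c := by
    simpa using pv_den_pos (y := 0) ha hb hc hx le_rfl (by linarith)
  rw [intervalIntegral.integral_eq_sub_of_hasDerivAt (f := fun y =>
    y * ((x * a + y * b + (1 - x - y) * c) + (x * a + (1 - x) * c)) /
      ((x * a + (1 - x) * c) ^ 2 * (x * a + y * b + (1 - x - y) * c) ^ 2)) ?_ hi]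
  · simp
    ring
  · intro y hy
    have hL := hpos y hy
    have d : HasDerivAt (fun y => x * a + y * b + (1 - x - y) * c) (b - c) y := by
      have := (((hasDerivAt_id y).mul_const b).const_add (x * a)).add
        (((hasDerivAt_id y).const_sub (1 - x)).mul_const c)
      exact this.congr_deriv (by ring)
    have := ((hasDerivAt_id y).mul (d.add_const (x * a + (1 - x) * c))).div
      ((d.pow 2).const_mul ((x * a + (1 - x) * c) ^ 2))
      (mul_pos (pow_pos he 2) (pow_pos hL 2)).ne'
    refine this.congr_deriv ?_
    have hc' : ∃ L, L = x * a + y * b + (1 - x - y) * c := ⟨_, rfl⟩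
    obtain ⟨L, hLL⟩ := hc'
    have hc'' : ∃ e, e = x * a + (1 - x) * c := ⟨_, rfl⟩
    obtain ⟨e, hee⟩ := hc''
    have hr : y * (b - c) = L - e := by rw [hLL, hee]; ring
    simp only [id, Pi.pow_apply, Pi.mul_apply, Nat.reduceSub, pow_one, Nat.cast_ofNat, ← hLL, ← hee] at hL he ⊢
    rw [div_eq_div_iff (by positivity) (by positivity)]
    linear_combination (e ^ 2 * L ^ 3 * (L ^ 2 - 2 * L * (L + e))) * hr

lemma pv_outer {a b c : ℝ} (ha : 0 < a) (hb : 0 < b) (hc : 0 < c) :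
    IntervalIntegrable (fun x => (1 - x) * ((x * a + (1 - x) * c) + (x * a + (1 - x) * b)) /
        ((x * a + (1 - x) * c) ^ 2 * (x * a + (1 - x) * b) ^ 2)) volume 0 1 ∧
    ∫ x in (0:ℝ)..1, (1 - x) * ((x * a + (1 - x) * c) + (x * a + (1 - x) * b)) /
        ((x * a + (1 - x) * c) ^ 2 * (x * a + (1 - x) * b) ^ 2) = 1 / (a * b * c) := by
  have hpos : ∀ b, 0 < b → ∀ x ∈ Set.uIcc (0:ℝ) 1, 0 < x * a + (1 - x) * b := fun b hb x hx => by
    rw [Set.uIcc_of_le (by linarith)] at hx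
    simpa using pv_den_pos (y := 0) ha hb hb hx.1 le_rfl (by linarith [hx.2])
  have hi : IntervalIntegrable (fun x => (1 - x) * ((x * a + (1 - x) * c) + (x * a + (1 - x) * b)) /
        ((x * a + (1 - x) * c) ^ 2 * (x * a + (1 - x) * b) ^ 2)) volume 0 1 := by
    refine ContinuousOn.intervalIntegrable ?_
    refine ContinuousOn.div (by fun_prop) (by fun_prop) fun x hx => ?_
    have := hpos b hb x hx
    have := hpos c hc x hx
    positivity
  refine ⟨hi, ?_⟩
  rw [intervalIntegral.integral_eq_sub_of_hasDerivAt (f := fun x =>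
    (-(1 - x) ^ 2) / (a * ((x * a + (1 - x) * c) * (x * a + (1 - x) * b)))) ?_ hi]
  · simp
    field_simp
  · intro x hx
    have h1 := hpos b hb x hx
    have h2 := hpos c hc x hx
    have d : ∀ b, HasDerivAt (fun x => x * a + (1 - x) * b) (a - b) x := fun b => by
      have := ((hasDerivAt_id x).mul_const a).add
        (((hasDerivAt_id x).const_sub 1).mul_const b)
      exact this.congr_deriv (by ring)
    have := ((((hasDerivAt_id x).const_sub 1).pow 2).neg).div
      (((d c).mul (d b)).const_mul a) (by simp only [Pi.mul_apply]; positivity)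
    refine this.congr_deriv ?_
    obtain ⟨e, hee⟩ : ∃ e, e = x * a + (1 - x) * c := ⟨_, rfl⟩
    obtain ⟨f, hff⟩ : ∃ f, f = x * a + (1 - x) * b := ⟨_, rfl⟩
    have hr : (1 - x) * (a - c) = a - e := by rw [hee]; ring
    have hr' : (1 - x) * (a - b) = a - f := by rw [hff]; ring
    simp only [id, Pi.pow_apply, Pi.neg_apply, Pi.mul_apply, Nat.reduceSub, pow_one, Nat.cast_ofNat, ← hff, ← hee] at h1 h2 ⊢
    rw [div_eq_div_iff (by positivity) (by positivity)]
    linear_combination (e ^ 2 * f ^ 2 * a * (1 - x)) * (f * hr + e * hr')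

lemma pv_feynman {ι : Type*} [Fintype ι] (w a b c : ι → ℝ) (ha : ∀ i, 0 < a i) (hb : ∀ i, 0 < b i)
    (hc : ∀ i, 0 < c i) :
    ∫ x in (0:ℝ)..1, ∫ y in (0:ℝ)..(1 - x),
      ∑ i, w i * (2 / (x * a i + y * b i + (1 - x - y) * c i) ^ 3) =
      ∑ i, w i * (1 / (a i * b i * c i)) := by
  have h1 : ∀ x ∈ Set.uIcc (0:ℝ) 1, (∫ y in (0:ℝ)..(1 - x),
      ∑ i, w i * (2 / (x * a i + y * b i + (1 - x - y) * c i) ^ 3)) =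
      ∑ i, w i * ((1 - x) * ((x * a i + (1 - x) * c i) + (x * a i + (1 - x) * b i)) /
        ((x * a i + (1 - x) * c i) ^ 2 * (x * a i + (1 - x) * b i) ^ 2)) := fun x hx => by
    rw [Set.uIcc_of_le (by linarith)] at hx
    rw [intervalIntegral.integral_finsetSum fun i _ =>
      (pv_inner (ha i) (hb i) (hc i) hx.1 hx.2).1.const_mul (w i)]
    refine Finset.sum_congr rfl fun i _ => ?_
    rw [intervalIntegral.integral_const_mul, (pv_inner (ha i) (hb i) (hc i) hx.1 hx.2).2]
  rw [intervalIntegral.integral_congr h1, intervalIntegral.integral_finsetSum fun i _ =>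
      (pv_outer (ha i) (hb i) (hc i)).1.const_mul (w i)]
  refine Finset.sum_congr rfl fun i _ => ?_
  rw [intervalIntegral.integral_const_mul, (pv_outer (ha i) (hb i) (hc i)).2]

lemma pv_swap (g : PVE → ℝ → ℝ → ℝ) (B : PVE → ℝ) (hB : Integrable B)
    (hg : Measurable fun z : PVE × ℝ × ℝ => g z.1 z.2.1 z.2.2)
    (hb : ∀ q x y, 0 ≤ x → 0 ≤ y → x + y ≤ 1 → |g q x y| ≤ B q) :
    Integrable (fun q => ∫ x in (0:ℝ)..1, ∫ y in (0:ℝ)..(1 - x), g q x y) ∧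
    ∫ q, ∫ x in (0:ℝ)..1, ∫ y in (0:ℝ)..(1 - x), g q x y =
      ∫ x in (0:ℝ)..1, ∫ y in (0:ℝ)..(1 - x), ∫ q, g q x y := by
  let S : Set (ℝ × ℝ) := {z | 0 < z.1 ∧ z.1 ≤ 1 ∧ 0 < z.2 ∧ z.2 ≤ 1 - z.1}
  have hS : MeasurableSet S := by
    refine (measurableSet_lt measurable_const measurable_fst).inter
      ((measurableSet_le measurable_fst measurable_const).inter
      ((measurableSet_lt measurable_const measurable_snd).inter
      (measurableSet_le measurable_snd (by fun_prop))))
  have hSsub : S ⊆ Set.Icc (0:ℝ) 1 ×ˢ Set.Icc (0:ℝ) 1 := by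
    rintro ⟨x, y⟩ ⟨h1, h2, h3, h4⟩
    simp only at h1 h2 h3 h4
    exact ⟨⟨h1.le, h2⟩, ⟨h3.le, by simp only; linarith⟩⟩
  have hfin : IsFiniteMeasure ((volume : Measure (ℝ × ℝ)).restrict S) := by
    refine ⟨?_⟩
    rw [Measure.restrict_apply_univ]
    exact (measure_mono hSsub).trans_lt (isCompact_Icc.prod isCompact_Icc).measure_lt_top
  have key : ∀ f : ℝ × ℝ → ℝ, Integrable f ((volume : Measure (ℝ × ℝ)).restrict S) →
      ∫ z in S, f z = ∫ x in (0:ℝ)..1, ∫ y in (0:ℝ)..(1 - x), f (x, y) := by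
    intro f hf
    rw [← integral_indicator hS]
    have hf' : Integrable (S.indicator f) (volume : Measure (ℝ × ℝ)) :=
      (integrable_indicator_iff hS).2 hf
    rw [Measure.volume_eq_prod] at hf' ⊢
    rw [integral_prod _ hf']
    rw [intervalIntegral.integral_of_le zero_le_one, ← integral_indicator measurableSet_Ioc]
    congr 1
    funext x
    by_cases hx : x ∈ Set.Ioc (0:ℝ) 1
    · rw [Set.indicator_of_mem hx, intervalIntegral.integral_of_le (by linarith [hx.2]),
        ← integral_indicator measurableSet_Ioc]
      congr 1
      funext y
      by_cases hy : y ∈ Set.Ioc (0:ℝ) (1 - x)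
      · rw [Set.indicator_of_mem hy, Set.indicator_of_mem]
        exact ⟨hx.1, hx.2, hy.1, hy.2⟩
      · rw [Set.indicator_of_notMem hy, Set.indicator_of_notMem]
        exact fun h => hy ⟨h.2.2.1, h.2.2.2⟩
    · rw [Set.indicator_of_notMem hx]
      rw [← integral_zero ℝ ℝ (μ := volume)]
      congr 1
      funext y
      rw [Set.indicator_of_notMem]
      exact fun h => hx ⟨h.1, h.2.1⟩
  have hG : Integrable (Function.uncurry fun (q : PVE) (z : ℝ × ℝ) => g q z.1 z.2)
      ((volume : Measure PVE).prod ((volume : Measure (ℝ × ℝ)).restrict S)) := by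
    refine (hB.comp_fst (volume.restrict S)).mono' hg.aestronglyMeasurable ?_
    have : ∀ᵐ z ∂((volume : Measure PVE).prod ((volume : Measure (ℝ × ℝ)).restrict S)),
        z.2 ∈ S := by
      have := Measure.quasiMeasurePreserving_snd (μ := (volume : Measure PVE))
        (ν := (volume : Measure (ℝ × ℝ)).restrict S)
      exact this.ae (ae_restrict_mem hS)
    filter_upwards [this] with z hz
    exact hb _ _ _ hz.1.le hz.2.2.1.le (by linarith [hz.2.2.2])
  have hq : ∀ q, ∫ z in S, g q z.1 z.2 = ∫ x in (0:ℝ)..1, ∫ y in (0:ℝ)..(1 - x), g q x y := by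
    intro q
    refine key (fun z => g q z.1 z.2) ?_
    refine (integrable_const (B q)).mono'
      (hg.comp (measurable_const.prodMk measurable_id : Measurable fun z : ℝ × ℝ => (q, z))).aestronglyMeasurable ?_
    filter_upwards [ae_restrict_mem hS] with z hz
    exact hb _ _ _ hz.1.le hz.2.2.1.le (by linarith [hz.2.2.2])
  refine ⟨?_, ?_⟩
  · have := hG.integral_prod_left
    simp only [Function.uncurry, hq] at this
    exact this
  · have h1 := integral_integral_swap hG
    simp only [hq] at h1
    rw [h1]
    exact key (fun z => ∫ q, g q z.1 z.2) hG.integral_prod_right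

/-- Identity (int-q7): the three-propagator Pauli–Villars integral with two
momentum factors, in Feynman parametrization over the standard 2-simplex. -/
theorem integral_pauliVillars_three_propagators_two_coords (n : ℕ)
    (A M : Fin (n + 1) → ℝ) (hM : ∀ i, 0 < M i) (hA : ∑ i, A i = 0)
    (k p : EuclideanSpace ℝ (Fin 4)) (μ ν : Fin 4) :
    Integrable (fun q : EuclideanSpace ℝ (Fin 4) =>
      ∑ i, A i * q ν * (q - k) μ /
        ((‖q‖ ^ 2 + M i ^ 2) * (‖q - k‖ ^ 2 + M i ^ 2) * (‖q + p‖ ^ 2 + M i ^ 2))) ∧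
    ∫ q : EuclideanSpace ℝ (Fin 4),
        ∑ i, A i * q ν * (q - k) μ /
          ((‖q‖ ^ 2 + M i ^ 2) * (‖q - k‖ ^ 2 + M i ^ 2) * (‖q + p‖ ^ 2 + M i ^ 2)) =
      π ^ 2 * ∫ β₁ in (0 : ℝ)..1, ∫ β₂ in (0 : ℝ)..(1 - β₁),
        ((∑ i, A i * ((β₂ • k - (1 - β₁ - β₂) • p) ν) *
              (((1 - β₁ - β₂) • (-k - p) - β₁ • k) μ) /
            (β₁ * β₂ * ‖k‖ ^ 2 + β₁ * (1 - β₁ - β₂) * ‖p‖ ^ 2 +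
              β₂ * (1 - β₁ - β₂) * ‖k + p‖ ^ 2 + M i ^ 2)) -
          (if μ = ν then (1 : ℝ) else 0) / 2 *
            ∑ i, A i * Real.log (β₁ * β₂ * ‖k‖ ^ 2 + β₁ * (1 - β₁ - β₂) * ‖p‖ ^ 2 +
              β₂ * (1 - β₁ - β₂) * ‖k + p‖ ^ 2 + M i ^ 2)) := by
  have hM2 : ∀ i, 0 < M i ^ 2 := fun i => pow_pos (hM i) 2
  -- subtracting the zeroth mass is free
  have hsub : ∀ f : Fin (n + 1) → ℝ, ∑ i, A i * f i = ∑ i, A i * (f i - f 0) := fun f => by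
    simp only [mul_sub, Finset.sum_sub_distrib, ← Finset.sum_mul, hA]
    ring
  -- the Feynman-parametrized integrand
  let g : PVE → ℝ → ℝ → ℝ := fun q x y =>
    ∑ i, A i * (q ν * (q - k) μ * (2 / (pvQ k p q x y + M i ^ 2) ^ 3
      - 2 / (pvQ k p q x y + M 0 ^ 2) ^ 3))
  have hg : ∀ q x y, g q x y = ∑ i, (A i * q ν * (q - k) μ) *
      (2 / (x * (‖q‖ ^ 2 + M i ^ 2) + y * (‖q - k‖ ^ 2 + M i ^ 2) +
        (1 - x - y) * (‖q + p‖ ^ 2 + M i ^ 2)) ^ 3) := fun q x y => by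
    have e : ∀ i, x * (‖q‖ ^ 2 + M i ^ 2) + y * (‖q - k‖ ^ 2 + M i ^ 2) +
        (1 - x - y) * (‖q + p‖ ^ 2 + M i ^ 2) = pvQ k p q x y + M i ^ 2 := fun i => by
      unfold pvQ; ring
    simp only [e, mul_assoc, g]
    conv_rhs => rw [hsub]
    refine Finset.sum_congr rfl fun i _ => ?_
    ring
  have hf : ∀ q : PVE, ∑ i, A i * q ν * (q - k) μ /
        ((‖q‖ ^ 2 + M i ^ 2) * (‖q - k‖ ^ 2 + M i ^ 2) * (‖q + p‖ ^ 2 + M i ^ 2)) =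
      ∫ x in (0:ℝ)..1, ∫ y in (0:ℝ)..(1 - x), g q x y := fun q => by
    have hp : ∀ (v : PVE) i, 0 < ‖v‖ ^ 2 + M i ^ 2 := fun v i => by have := hM2 i; positivity
    simp only [hg]
    rw [pv_feynman _ _ _ _ (hp _) (hp _) (hp _)]
    refine Finset.sum_congr rfl fun i _ => ?_
    ring
  choose B hB using fun i => pv_dom k p (hM2 i) (hM2 0) (fun q => q ν * (q - k) μ)
    (fun q => pv_quad_bound k q μ ν)
  have hmeas : Measurable fun z : PVE × ℝ × ℝ => g z.1 z.2.1 z.2.2 := by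
    simp only [g, pvQ]
    fun_prop
  have main := pv_swap g (fun q => (∑ i, |A i| * B i) * ((1 + ‖q‖ ^ 2) ^ 3)⁻¹)
    (pv_base.const_mul _) hmeas (fun q x y hx hy hxy => by
      rw [Finset.sum_mul]
      refine (Finset.abs_sum_le_sum_abs _ _).trans (Finset.sum_le_sum fun i _ => ?_)
      rw [abs_mul, mul_assoc |A i|]
      exact mul_le_mul_of_nonneg_left (hB i q x y hx hy hxy) (abs_nonneg _))
  simp only [hf]
  refine ⟨main.1, main.2.trans ?_⟩
  rw [← intervalIntegral.integral_const_mul]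
  refine intervalIntegral.integral_congr fun x hx => ?_
  rw [Set.uIcc_of_le zero_le_one] at hx
  rw [← intervalIntegral.integral_const_mul]
  refine intervalIntegral.integral_congr fun y hy => ?_
  rw [Set.uIcc_of_le (by linarith [hx.2])] at hy
  have hxy : x + y ≤ 1 := by linarith [hy.2]
  simp only [g]
  rw [integral_finsetSum _ fun i _ => (pv_int k p (hM2 i) (hM2 0) (fun q => q ν * (q - k) μ)
    (by fun_prop) (fun q => pv_quad_bound k q μ ν) hx.1 hy.1 hxy).const_mul (A i)]
  simp only [integral_const_mul, pv_fixed k p (hM2 _) (hM2 0) μ ν hx.1 hy.1 hxy]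
  have eD : ∀ i, x * y * ‖k‖ ^ 2 + x * (1 - x - y) * ‖p‖ ^ 2 +
              y * (1 - x - y) * ‖k + p‖ ^ 2 + M i ^ 2 = pvD k p x y + M i ^ 2 := fun i => rfl
  simp only [eD]
  rw [hsub (fun i => log (pvD k p x y + M i ^ 2))]
  generalize (y • k - (1 - x - y) • p) ν = u
  generalize ((1 - x - y) • (-k - p) - x • k) μ = v
  have e1 : ∑ i, A i * u * v / (pvD k p x y + M i ^ 2) =
      ∑ i, A i * (u * v / (pvD k p x y + M i ^ 2)) :=
    Finset.sum_congr rfl fun i _ => by ring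
  rw [e1, hsub (fun i => u * v / (pvD k p x y + M i ^ 2)), Finset.mul_sum, ← Finset.sum_sub_distrib, Finset.mul_sum]
  refine Finset.sum_congr rfl fun i _ => ?_
  ring
end

section
/- Let M > 0, k, p ∈ ℝ⁴, and fix a coordinate index μ. Then q ↦ (q-k)_μ/((‖q‖²+M²)(‖q-k‖²+M²)(‖q+p‖²+M²)) is Lebesgue integrable on ℝ⁴ and ∫_{ℝ⁴} (q-k)_μ dq / ((‖q‖²+M²)(‖q-k‖²+M²)(‖q+p‖²+M²)) = π² ∫_0^1 dβ₁ ∫_0^{1-β₁} dβ₂ of (β₃(-k-p) - β₁k)_μ/(β₁β₂‖k‖² + β₁β₃‖p‖² + β₂β₃‖k+p‖² + M²) with β₃ = 1-β₁-β₂. -/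
open MeasureTheory Real

lemma feyn_inner (A B C x : ℝ) (hA : 0 < A) (hB : 0 < B) (hC : 0 < C) (hx0 : 0 ≤ x) (hx : x ≤ 1) :
    ∫ y in (0:ℝ)..(1 - x), 2 / (x * A + y * B + (1 - x - y) * C) ^ 3 =
      (1 - x) * ((x * A + (1 - x) * C) + (x * A + (1 - x) * B)) /
        ((x * A + (1 - x) * C) ^ 2 * (x * A + (1 - x) * B) ^ 2) := by
  have pos : ∀ y ∈ Set.uIcc 0 (1 - x), 0 < x * A + y * B + (1 - x - y) * C := by
    intro y hy
    rw [Set.uIcc_of_le (by linarith)] at hy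
    obtain ⟨h0, h1⟩ := hy
    rcases hx0.eq_or_lt with h | h
    · rcases h0.eq_or_lt with h' | h'
      · subst h; subst h'; simpa using hC
      · have := mul_pos h' hB
        have := mul_nonneg (sub_nonneg.2 h1) hC.le
        have := mul_nonneg hx0 hA.le
        linarith
    · have := mul_pos h hA
      have := mul_nonneg (sub_nonneg.2 h1) hC.le
      have := mul_nonneg h0 hB.le
      linarith
  have p0 : 0 < x * A + (1 - x) * C := by simpa using pos 0 (by simp)
  have key := intervalIntegral.integral_eq_sub_of_hasDerivAt (a := 0) (b := 1 - x)
    (f := fun y => y * ((x * A + (1 - x) * C) + (x * A + y * B + (1 - x - y) * C)) /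
        ((x * A + (1 - x) * C) ^ 2 * (x * A + y * B + (1 - x - y) * C) ^ 2))
    (f' := fun y => 2 / (x * A + y * B + (1 - x - y) * C) ^ 3) ?_ ?_
  · rw [key]; simp
  · intro y hy
    have hp := pos y hy
    have hD : HasDerivAt (fun y => x * A + y * B + (1 - x - y) * C) (B - C) y := by
      have := (((hasDerivAt_id y).mul_const B).const_add (x * A)).add
        (((hasDerivAt_id y).const_sub (1 - x)).mul_const C)
      exact this.congr_deriv (by ring)
    have := ((hasDerivAt_id y).mul (hD.const_add (x * A + (1 - x) * C))).div
      ((hD.pow 2).const_mul ((x * A + (1 - x) * C) ^ 2)) (by simp only [Pi.pow_apply]; positivity)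
    refine this.congr_deriv ?_
    symm
    have e : x * A + y * B + (1 - x - y) * C = (x * A + (1 - x) * C) + y * (B - C) := by ring
    simp only [id, Pi.mul_apply, Pi.pow_apply]
    rw [e] at hp ⊢
    generalize x * A + (1 - x) * C = D0 at *
    field_simp
    ring
  · apply ContinuousOn.intervalIntegrable
    apply ContinuousOn.div (by fun_prop) (by fun_prop)
    intro y hy
    have := pos y hy
    positivity

lemma feyn_outer (A B C : ℝ) (hA : 0 < A) (hB : 0 < B) (hC : 0 < C) :
    ∫ x in (0:ℝ)..1,
      (1 - x) * ((x * A + (1 - x) * C) + (x * A + (1 - x) * B)) /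
        ((x * A + (1 - x) * C) ^ 2 * (x * A + (1 - x) * B) ^ 2) = 1 / (A * B * C) := by
  have pos : ∀ C : ℝ, 0 < C → ∀ x ∈ Set.uIcc (0:ℝ) 1, 0 < x * A + (1 - x) * C := by
    intro C hC x hx
    rw [Set.uIcc_of_le (by linarith)] at hx
    obtain ⟨h0, h1⟩ := hx
    rcases h0.eq_or_lt with h | h
    · subst h; simpa using hC
    · have := mul_pos h hA
      have := mul_nonneg (sub_nonneg.2 h1) hC.le
      linarith
  have key := intervalIntegral.integral_eq_sub_of_hasDerivAt (a := 0) (b := 1)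
    (f := fun x => x * (x * A + (1 - x) * (B + C)) /
        (B * C * ((x * A + (1 - x) * C) * (x * A + (1 - x) * B))))
    (f' := fun x => (1 - x) * ((x * A + (1 - x) * C) + (x * A + (1 - x) * B)) /
        ((x * A + (1 - x) * C) ^ 2 * (x * A + (1 - x) * B) ^ 2)) ?_ ?_
  · rw [key]; simp; field_simp
  · intro x hx
    have hp := pos B hB x hx
    have hp' := pos C hC x hx
    have hD : ∀ C : ℝ, HasDerivAt (fun x => x * A + (1 - x) * C) (A - C) x := by
      intro C
      have := ((hasDerivAt_id x).mul_const A).add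
        (((hasDerivAt_id x).const_sub 1).mul_const C)
      exact this.congr_deriv (by ring)
    have := ((hasDerivAt_id x).mul (hD (B + C))).div
      (((hD C).mul (hD B)).const_mul (B * C)) (by simp only [Pi.mul_apply]; positivity)
    refine this.congr_deriv ?_
    symm
    simp only [id, Pi.mul_apply]
    rw [div_eq_div_iff (by positivity) (by positivity)]
    ring
  · apply ContinuousOn.intervalIntegrable
    apply ContinuousOn.div (by fun_prop) (by fun_prop)
    intro y hy
    have := pos B hB y hy
    have := pos C hC y hy
    positivity


lemma radial (Δ : ℝ) (hΔ : 0 < Δ) :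
    ∫ q : EuclideanSpace ℝ (Fin 4), 2 / (‖q‖ ^ 2 + Δ) ^ 3 = π ^ 2 / Δ := by
  have h := integral_fun_norm_addHaar (volume : Measure (EuclideanSpace ℝ (Fin 4)))
    (fun r : ℝ => 2 / (r ^ 2 + Δ) ^ 3)
  rw [h]
  have hv : (volume : Measure (EuclideanSpace ℝ (Fin 4))).real (Metric.ball 0 1) = π ^ 2 / 2 := by
    rw [Measure.real, EuclideanSpace.volume_ball]
    have : Real.Gamma ((4:ℝ) / 2 + 1) = 2 := by
      rw [show (4:ℝ) / 2 + 1 = ((2:ℕ):ℝ) + 1 by norm_num, Real.Gamma_nat_eq_factorial]; norm_num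
    simp [this]
    rw [show (√π) ^ 4 = ((√π) ^ 2) ^ 2 by ring, Real.sq_sqrt pi_pos.le, ENNReal.toReal_ofReal (by positivity)]
  have hi : ∫ y in Set.Ioi (0:ℝ), y ^ 3 * (2 / (y ^ 2 + Δ) ^ 3) = 1 / (2 * Δ) := by
    have := integral_Ioi_of_hasDerivAt_of_nonneg' (a := 0) (l := 1 / (2 * Δ))
      (g := fun y : ℝ => y ^ 4 / (2 * Δ * (y ^ 2 + Δ) ^ 2))
      (g' := fun y : ℝ => y ^ 3 * (2 / (y ^ 2 + Δ) ^ 3)) ?_ ?_ ?_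
    · rw [this]; simp
    · intro y hy
      have hD : HasDerivAt (fun y : ℝ => y ^ 2 + Δ) (2 * y) y := by
        simpa using (hasDerivAt_pow 2 y).add_const Δ
      have := (hasDerivAt_pow 4 y).div ((hD.pow 2).const_mul (2 * Δ))
        (by simp only [Pi.pow_apply]; positivity)
      refine this.congr_deriv ?_
      simp only [Pi.pow_apply]
      field_simp
      norm_num
      ring
    · intro y hy
      have : (0:ℝ) < y := hy
      positivity
    · have h1 : Filter.Tendsto (fun y : ℝ => y ^ 2) Filter.atTop Filter.atTop :=
        Filter.tendsto_pow_atTop (by norm_num)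
      have h2 : Filter.Tendsto (fun y : ℝ => Δ / (y ^ 2 + Δ)) Filter.atTop (nhds 0) :=
        (Filter.tendsto_atTop_add_const_right _ _ h1).const_div_atTop Δ
      have h3 := ((h2.const_sub 1).pow 2).div_const (2 * Δ)
      simp only [sub_zero, one_pow] at h3
      refine h3.congr fun y => ?_
      field_simp
      ring
  simp only [finrank_euclideanSpace, Fintype.card_fin, smul_eq_mul, nsmul_eq_mul, hv]
  norm_num
  norm_num at hi
  rw [hi]
  field_simp
  norm_num

lemma G_int (k : EuclideanSpace ℝ (Fin 4)) (μ : Fin 4) :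
    Integrable (fun q : EuclideanSpace ℝ (Fin 4) => |(q - k) μ| / (1 + ‖q‖ ^ 2) ^ 3) := by
  have h : Integrable (fun q : EuclideanSpace ℝ (Fin 4) => (1 + ‖q‖) ^ (-5 : ℝ)) :=
    integrable_one_add_norm (by simp; norm_num)
  refine (h.const_mul ((1 + ‖k‖) * 8)).mono' (Measurable.aestronglyMeasurable (by fun_prop)) (Filter.Eventually.of_forall fun q => ?_)
  have h1 : |(q - k) μ| ≤ ‖q‖ + ‖k‖ := (PiLp.norm_apply_le (q - k) μ).trans (norm_sub_le q k)
  have hq := norm_nonneg q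
  have hk := norm_nonneg k
  rw [Real.norm_of_nonneg (by positivity), Real.rpow_neg (by positivity),
    show (5:ℝ) = (5:ℕ) by norm_num, Real.rpow_natCast, ← div_eq_mul_inv,
    div_le_div_iff₀ (by positivity) (by positivity)]
  have h2 : (1 + ‖q‖) ^ 2 ≤ 2 * (1 + ‖q‖ ^ 2) := by nlinarith [sq_nonneg (1 - ‖q‖)]
  have h3 : |(q - k) μ| ≤ (1 + ‖k‖) * (1 + ‖q‖) := by nlinarith [mul_nonneg hq hk]
  calc |(q - k) μ| * (1 + ‖q‖) ^ 5 ≤ ((1 + ‖k‖) * (1 + ‖q‖)) * (1 + ‖q‖) ^ 5 := by gcongr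
    _ = (1 + ‖k‖) * ((1 + ‖q‖) ^ 2) ^ 3 := by ring
    _ ≤ (1 + ‖k‖) * (2 * (1 + ‖q‖ ^ 2)) ^ 3 := by gcongr
    _ = _ := by ring

lemma swap_dom (a b : ℝ) (hab : a ≤ b) (f : ℝ → EuclideanSpace ℝ (Fin 4) → ℝ)
    (hf : Measurable (Function.uncurry f)) (G : EuclideanSpace ℝ (Fin 4) → ℝ) (hG : Integrable G)
    (hb : ∀ t, a ≤ t → t ≤ b → ∀ q, |f t q| ≤ G q) :
    ∫ t in a..b, ∫ q, f t q = ∫ q, ∫ t in a..b, f t q := by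
  apply intervalIntegral_integral_swap
  rw [Set.uIoc_of_le hab]
  have h1 : Integrable (fun z : ℝ × EuclideanSpace ℝ (Fin 4) => G z.2)
      ((volume.restrict (Set.Ioc a b)).prod volume) := hG.comp_snd _
  refine h1.mono' hf.aestronglyMeasurable ?_
  have : ∀ᵐ t ∂(volume.restrict (Set.Ioc a b)), t ∈ Set.Ioc a b :=
    ae_restrict_mem measurableSet_Ioc
  filter_upwards [Measure.quasiMeasurePreserving_fst.ae this] with z hz
  exact hb z.1 hz.1.le hz.2 z.2

lemma loop_int (D : ℝ) (hD : 0 < D) (s k : EuclideanSpace ℝ (Fin 4)) (μ : Fin 4) :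
    ∫ q : EuclideanSpace ℝ (Fin 4), (q - k) μ * (2 / (‖q - s‖ ^ 2 + D) ^ 3) =
      π ^ 2 * ((s - k) μ / D) := by
  have bd : ∃ K : ℝ, 0 < K ∧ ∀ q : EuclideanSpace ℝ (Fin 4), 1 + ‖q‖ ^ 2 ≤ K * (‖q‖ ^ 2 + D) := by
    refine ⟨1 + 1 / D, by positivity, fun q => ?_⟩
    have : (1 + 1 / D) * (‖q‖ ^ 2 + D) = 1 + ‖q‖ ^ 2 + (‖q‖ ^ 2 / D + D) := by field_simp; ring
    rw [this]
    have : 0 ≤ ‖q‖ ^ 2 / D + D := by positivity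
    linarith
  obtain ⟨K, hK, hb⟩ := bd
  have I : ∀ k : EuclideanSpace ℝ (Fin 4),
      Integrable (fun q : EuclideanSpace ℝ (Fin 4) => (q - k) μ * (2 / (‖q‖ ^ 2 + D) ^ 3)) := by
    intro k
    refine ((G_int k μ).const_mul (2 * K ^ 3)).mono'
      (Measurable.aestronglyMeasurable (by fun_prop)) (Filter.Eventually.of_forall fun q => ?_)
    rw [norm_mul, Real.norm_eq_abs, Real.norm_of_nonneg (by positivity),
      show 2 * K ^ 3 * (|(q - k) μ| / (1 + ‖q‖ ^ 2) ^ 3) =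
        |(q - k) μ| * (2 * K ^ 3 / (1 + ‖q‖ ^ 2) ^ 3) by ring]
    refine mul_le_mul_of_nonneg_left ?_ (abs_nonneg _)
    rw [div_le_div_iff₀ (by positivity) (by positivity), mul_assoc, ← mul_pow]
    gcongr
    exact hb q
  rw [← integral_add_right_eq_self _ s]
  have e : ∀ q : EuclideanSpace ℝ (Fin 4),
      (q + s - k) μ * (2 / (‖q + s - s‖ ^ 2 + D) ^ 3) =
      (q - 0) μ * (2 / (‖q‖ ^ 2 + D) ^ 3) + ((s - k) μ) * (2 / (‖q‖ ^ 2 + D) ^ 3) := by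
    intro q
    rw [add_sub_cancel_right]
    simp
    ring
  have I2 : Integrable (fun q : EuclideanSpace ℝ (Fin 4) =>
      ((s - k) μ) * (2 / (‖q‖ ^ 2 + D) ^ 3)) := by
    refine ((I (k - s)).sub (I 0)).congr (Filter.Eventually.of_forall fun q => ?_)
    simp
    ring
  simp_rw [e]
  rw [integral_add (I 0) I2, integral_const_mul, radial D hD]
  have odd : ∫ q : EuclideanSpace ℝ (Fin 4), (q - 0) μ * (2 / (‖q‖ ^ 2 + D) ^ 3) = 0 := by
    have := integral_neg_eq_self
      (fun q : EuclideanSpace ℝ (Fin 4) => (q - 0) μ * (2 / (‖q‖ ^ 2 + D) ^ 3)) volume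
    simp only [sub_zero, norm_neg, PiLp.neg_apply, neg_mul, integral_neg] at this ⊢
    linarith
  rw [odd]
  ring

/-- Shifted quadratic forms dominate `1 + ‖q‖ ^ 2`. -/
lemma shift_bound (M : ℝ) (hM : 0 < M) (L : ℝ) (q v : EuclideanSpace ℝ (Fin 4))
    (hv : ‖v‖ ^ 2 ≤ L) :
    1 + ‖q‖ ^ 2 ≤ (2 + (1 + 2 * L) / M ^ 2) * (‖q - v‖ ^ 2 + M ^ 2) := by
  have hL : 0 ≤ L := (sq_nonneg _).trans hv
  have h1 : ‖q‖ ≤ ‖q - v‖ + ‖v‖ := by simpa using norm_add_le (q - v) v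
  have h2 : ‖q‖ ^ 2 ≤ 2 * ‖q - v‖ ^ 2 + 2 * ‖v‖ ^ 2 := by
    have : ‖q‖ ^ 2 ≤ (‖q - v‖ + ‖v‖) ^ 2 := by gcongr
    nlinarith [sq_nonneg (‖q - v‖ - ‖v‖)]
  have e : (2 + (1 + 2 * L) / M ^ 2) * (‖q - v‖ ^ 2 + M ^ 2) =
      2 * ‖q - v‖ ^ 2 + (1 + 2 * L) + (2 * M ^ 2 + (1 + 2 * L) / M ^ 2 * ‖q - v‖ ^ 2) := by
    field_simp
    ring
  have : 0 ≤ 2 * M ^ 2 + (1 + 2 * L) / M ^ 2 * ‖q - v‖ ^ 2 := by positivity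
  rw [e]
  linarith

lemma inv_bound (K W X : ℝ) (hW : 0 < W) (hK : 0 < K) (h : W ≤ K * X) :
    0 < X ∧ X⁻¹ ≤ K / W := by
  have hX : 0 < X := pos_of_mul_pos_right (hW.trans_le h) hK.le
  refine ⟨hX, ?_⟩
  rw [inv_eq_one_div, div_le_div_iff₀ hX hW]
  linarith

/-- Completing the square. -/
lemma complete_square (k p q : EuclideanSpace ℝ (Fin 4)) (M x y : ℝ) :
    x * (‖q‖ ^ 2 + M ^ 2) + y * (‖q - k‖ ^ 2 + M ^ 2) + (1 - x - y) * (‖q + p‖ ^ 2 + M ^ 2) =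
      ‖q - (y • k - (1 - x - y) • p)‖ ^ 2 +
        (x * y * ‖k‖ ^ 2 + x * (1 - x - y) * ‖p‖ ^ 2 + y * (1 - x - y) * ‖k + p‖ ^ 2 + M ^ 2) := by
  simp only [EuclideanSpace.real_norm_sq_eq, Fin.sum_univ_four, PiLp.sub_apply, PiLp.add_apply,
    PiLp.smul_apply, smul_eq_mul]
  ring

/-- Identity (int-q6): the three-propagator integral with factor `(q-k)_μ`,
in Feynman parametrization. -/
theorem integral_three_propagators_shifted_coord (M : ℝ) (hM : 0 < M)
    (k p : EuclideanSpace ℝ (Fin 4)) (μ : Fin 4) :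
    Integrable (fun q : EuclideanSpace ℝ (Fin 4) =>
      (q - k) μ / ((‖q‖ ^ 2 + M ^ 2) * (‖q - k‖ ^ 2 + M ^ 2) * (‖q + p‖ ^ 2 + M ^ 2))) ∧
    ∫ q : EuclideanSpace ℝ (Fin 4),
        (q - k) μ / ((‖q‖ ^ 2 + M ^ 2) * (‖q - k‖ ^ 2 + M ^ 2) * (‖q + p‖ ^ 2 + M ^ 2)) =
      π ^ 2 * ∫ β₁ in (0 : ℝ)..1, ∫ β₂ in (0 : ℝ)..(1 - β₁),
        ((1 - β₁ - β₂) • (-k - p) - β₁ • k) μ /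
          (β₁ * β₂ * ‖k‖ ^ 2 + β₁ * (1 - β₁ - β₂) * ‖p‖ ^ 2 +
            β₂ * (1 - β₁ - β₂) * ‖k + p‖ ^ 2 + M ^ 2) := by
  set A : EuclideanSpace ℝ (Fin 4) → ℝ := fun q => ‖q‖ ^ 2 + M ^ 2 with hA
  set B : EuclideanSpace ℝ (Fin 4) → ℝ := fun q => ‖q - k‖ ^ 2 + M ^ 2 with hB
  set C : EuclideanSpace ℝ (Fin 4) → ℝ := fun q => ‖q + p‖ ^ 2 + M ^ 2 with hC
  have mA : Measurable A := by fun_prop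
  have mB : Measurable B := by fun_prop
  have mC : Measurable C := by fun_prop
  have pA : ∀ q, 0 < A q := fun q => by positivity
  have pB : ∀ q, 0 < B q := fun q => by positivity
  have pC : ∀ q, 0 < C q := fun q => by positivity
  obtain ⟨K, hK, bA, bB, bC⟩ : ∃ K : ℝ, 0 < K ∧ (∀ q, 1 + ‖q‖ ^ 2 ≤ K * A q) ∧
      (∀ q, 1 + ‖q‖ ^ 2 ≤ K * B q) ∧ (∀ q, 1 + ‖q‖ ^ 2 ≤ K * C q) := by
    refine ⟨2 + (1 + 2 * (‖k‖ ^ 2 + ‖p‖ ^ 2)) / M ^ 2, by positivity, fun q => ?_, fun q => ?_,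
      fun q => ?_⟩
    · simpa using shift_bound M hM (‖k‖ ^ 2 + ‖p‖ ^ 2) q 0 (by simp; positivity)
    · exact shift_bound M hM (‖k‖ ^ 2 + ‖p‖ ^ 2) q k (by nlinarith [sq_nonneg ‖p‖])
    · simpa using shift_bound M hM (‖k‖ ^ 2 + ‖p‖ ^ 2) q (-p)
        (by rw [norm_neg]; nlinarith [sq_nonneg ‖k‖])
  have W : ∀ q : EuclideanSpace ℝ (Fin 4), 0 < 1 + ‖q‖ ^ 2 := fun q => by positivity
  have hG := (G_int k μ).const_mul (2 * K ^ 3)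
  have eG : ∀ q : EuclideanSpace ℝ (Fin 4), 2 * K ^ 3 * (|(q - k) μ| / (1 + ‖q‖ ^ 2) ^ 3) =
      |(q - k) μ| * (2 * (K / (1 + ‖q‖ ^ 2)) ^ 3) := fun q => by
    rw [div_pow]; ring
  have mN : Measurable (fun q : EuclideanSpace ℝ (Fin 4) => (q - k) μ) := by fun_prop
  change Integrable (fun q => (q - k) μ / (A q * B q * C q)) ∧
    ∫ q, (q - k) μ / (A q * B q * C q) = _
  constructor
  · refine hG.mono' (Measurable.aestronglyMeasurable (by fun_prop))
      (Filter.Eventually.of_forall fun q => ?_)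
    have hW := W q
    obtain ⟨a0, a1⟩ := inv_bound K _ _ hW hK (bA q)
    obtain ⟨b0, b1⟩ := inv_bound K _ _ hW hK (bB q)
    obtain ⟨c0, c1⟩ := inv_bound K _ _ hW hK (bC q)
    rw [eG, norm_div, Real.norm_eq_abs, Real.norm_of_nonneg (by positivity), div_eq_mul_inv]
    refine mul_le_mul_of_nonneg_left ?_ (abs_nonneg _)
    generalize K / (1 + ‖q‖ ^ 2) = u at *
    have u0 : 0 < u := (inv_pos.2 a0).trans_le a1
    calc (A q * B q * C q)⁻¹ = (A q)⁻¹ * (B q)⁻¹ * (C q)⁻¹ := by rw [mul_inv, mul_inv]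
      _ ≤ u * u * u := by gcongr
      _ ≤ 2 * u ^ 3 := by nlinarith [pow_pos u0 3]
  -- the intermediate integrand after the inner Feynman integration
  set g : ℝ → EuclideanSpace ℝ (Fin 4) → ℝ := fun x q =>
    (1 - x) * ((x * A q + (1 - x) * C q) + (x * A q + (1 - x) * B q)) /
        ((x * A q + (1 - x) * C q) ^ 2 * (x * A q + (1 - x) * B q) ^ 2) with hg
  have s1 : ∀ q, (q - k) μ / (A q * B q * C q) = ∫ x in (0:ℝ)..1, (q - k) μ * g x q := by
    intro q
    rw [intervalIntegral.integral_const_mul, hg, feyn_outer _ _ _ (pA q) (pB q) (pC q)]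
    ring
  have s2 : ∀ x, 0 ≤ x → x ≤ 1 → ∀ q, (q - k) μ * g x q =
      ∫ y in (0:ℝ)..(1 - x), (q - k) μ * (2 / (x * A q + y * B q + (1 - x - y) * C q) ^ 3) := by
    intro x h0 h1 q
    rw [intervalIntegral.integral_const_mul, hg, feyn_inner _ _ _ x (pA q) (pB q) (pC q) h0 h1]
  simp_rw [s1]
  rw [← swap_dom 0 1 zero_le_one (fun x q => (q - k) μ * g x q) ?_ _ hG ?_,
    ← intervalIntegral.integral_const_mul]
  · refine intervalIntegral.integral_congr fun x hx => ?_
    rw [Set.uIcc_of_le zero_le_one] at hx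
    obtain ⟨h0, h1⟩ := hx
    simp only
    simp_rw [s2 x h0 h1]
    rw [← swap_dom 0 (1 - x) (by linarith)
      (fun y q => (q - k) μ * (2 / (x * A q + y * B q + (1 - x - y) * C q) ^ 3)) ?_ _ hG ?_,
      ← intervalIntegral.integral_const_mul]
    · refine intervalIntegral.integral_congr fun y hy => ?_
      rw [Set.uIcc_of_le (by linarith)] at hy
      obtain ⟨y0, y1⟩ := hy
      have z0 : 0 ≤ 1 - x - y := by linarith
      simp only [hA, hB, hC]
      simp_rw [complete_square]
      rw [loop_int _ (by positivity)]
      congr 2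
      simp
      ring
    · simp only [Function.uncurry_def]
      fun_prop
    · intro y y0 y1 q
      have z0 : 0 ≤ 1 - x - y := by linarith
      obtain ⟨d0, d1⟩ := inv_bound K (1 + ‖q‖ ^ 2) (x * A q + y * B q + (1 - x - y) * C q)
        (W q) hK (by
          nlinarith [mul_le_mul_of_nonneg_left (bA q) h0, mul_le_mul_of_nonneg_left (bB q) y0,
            mul_le_mul_of_nonneg_left (bC q) z0])
      rw [eG, abs_mul]
      refine mul_le_mul_of_nonneg_left ?_ (abs_nonneg _)
      rw [abs_of_nonneg (by positivity), div_eq_mul_inv, ← inv_pow]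
      gcongr
  · simp only [Function.uncurry_def, hg]
    fun_prop
  · intro x h0 h1 q
    have z0 : 0 ≤ 1 - x := by linarith
    obtain ⟨d0, d1⟩ := inv_bound K (1 + ‖q‖ ^ 2) (x * A q + (1 - x) * C q) (W q) hK (by
      nlinarith [mul_le_mul_of_nonneg_left (bA q) h0, mul_le_mul_of_nonneg_left (bC q) z0])
    obtain ⟨e0, e1⟩ := inv_bound K (1 + ‖q‖ ^ 2) (x * A q + (1 - x) * B q) (W q) hK (by
      nlinarith [mul_le_mul_of_nonneg_left (bA q) h0, mul_le_mul_of_nonneg_left (bB q) z0])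
    rw [eG, abs_mul]
    refine mul_le_mul_of_nonneg_left ?_ (abs_nonneg _)
    simp only [hg]
    generalize x * A q + (1 - x) * C q = D at *
    generalize x * A q + (1 - x) * B q = E at *
    generalize K / (1 + ‖q‖ ^ 2) = u at *
    have u0 : 0 < u := (inv_pos.2 d0).trans_le d1
    rw [abs_of_nonneg (by positivity)]
    calc (1 - x) * (D + E) / (D ^ 2 * E ^ 2)
        = (1 - x) * (D⁻¹ * E⁻¹ ^ 2 + D⁻¹ ^ 2 * E⁻¹) := by field_simp
      _ ≤ 1 * (u * u ^ 2 + u ^ 2 * u) := by gcongr; linarith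
      _ = 2 * u ^ 3 := by ring
end
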